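/- The two interpolations have the same limit: let U ⊂ Ω be open, ε_k → 0, and y_k : 𝓛_{ε_k}(U) → ℝᵈ a sequence of lattice deformations whose number of broken cells satisfies #C̄'_{ε_k} ≤ C ε_k^{−d+1} for a constant C independent of k. Then for every interaction direction ν ∈ 𝒱, the difference ỹ_k − ȳ_{ν,k} of the simplicial interpolation and the ν-directional interpolation converges to 0 in measure as ε_k → 0. -/

import Mathlib

open scoped BigOperators ENNReal Pointwise
open MeasureTheory Filter Set

attribute [local instance] Classical.propDecidable

noncomputable section

namespace Cleavage

/-- `ℝ^{d × 2^d}`: matrices whose columns are indexed by the corner bit-vectors of a cell. -/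
abbrev CellMat (d : ℕ) := Fin d → (Fin d → Bool) → ℝ

/-- Euclidean norm on `ℝ^n`. -/
def eunorm {n : ℕ} (v : Fin n → ℝ) : ℝ := Real.sqrt (∑ i, v i ^ 2)

/-- Frobenius (Euclidean) norm on `ℝ^{d×2^d}`. -/
def mnorm {d : ℕ} (G : CellMat d) : ℝ := Real.sqrt (∑ j, ∑ b, G j b ^ 2)

/-- corner of the reference cube `[-1/2,1/2)^d` indexed by a bit-vector. -/
def cornerVec {d : ℕ} (b : Fin d → Bool) : Fin d → ℝ := fun i => if b i then 1 / 2 else -(1 / 2)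

/-- the matrix `Z` whose columns are the corners `z_i = A·(±1/2,…,±1/2)` of the reference cell. -/
def Zmat (d : ℕ) (A : Matrix (Fin d) (Fin d) ℝ) : CellMat d := fun j b => A.mulVec (cornerVec b) j

/-- `R ∈ SO(d)`. -/
def IsSO {d : ℕ} (R : Matrix (Fin d) (Fin d) ℝ) : Prop := R.transpose * R = 1 ∧ R.det = 1

/-- the product `R G` of a `d×d` matrix with an element of `ℝ^{d×2^d}`. -/
def rotCell {d : ℕ} (R : Matrix (Fin d) (Fin d) ℝ) (G : CellMat d) : CellMat d :=
  fun j b => ∑ i, R j i * G i b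

/-- `F · Z`. -/
def matZ (d : ℕ) (A F : Matrix (Fin d) (Fin d) ℝ) : CellMat d := rotCell F (Zmat d A)

/-- the translation `(c,…,c)`. -/
def transCell {d : ℕ} (c : Fin d → ℝ) : CellMat d := fun j _ => c j

/-- `SO̅(d) = { R Z : R ∈ SO(d) }`. -/
def SObar (d : ℕ) (A : Matrix (Fin d) (Fin d) ℝ) : Set (CellMat d) :=
  {G | ∃ R : Matrix (Fin d) (Fin d) ℝ, IsSO R ∧ G = rotCell R (Zmat d A)}

/-- Euclidean distance of `G` to `SO̅(d)`. -/
def distSObar (d : ℕ) (A : Matrix (Fin d) (Fin d) ℝ) (G : CellMat d) : ℝ :=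
  sInf {t | ∃ H ∈ SObar d A, t = mnorm (G - H)}

/-- `G ⊥ V₀`, i.e. the columns of `G` sum to zero. -/
def PerpTrans {d : ℕ} (G : CellMat d) : Prop := ∀ j, ∑ b, G j b = 0

/-- Frobenius inner product. -/
def frobInner {d : ℕ} (G H : CellMat d) : ℝ := ∑ j, ∑ b, G j b * H j b

/-- the quadratic form `Q_cell(G) = D²W_cell(Z)[G,G]`. -/
def Qcell (d : ℕ) (A : Matrix (Fin d) (Fin d) ℝ) (W : CellMat d → ℝ) (G : CellMat d) : ℝ :=
  iteratedFDeriv ℝ 2 W (Zmat d A) ![G, G]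

/-- Assumption (i): frame indifference. -/
def FrameIndiff (d : ℕ) (W : CellMat d → ℝ) : Prop :=
  ∀ (G : CellMat d) (R : Matrix (Fin d) (Fin d) ℝ) (c : Fin d → ℝ),
    IsSO R → W (rotCell R G + transCell c) = W G

/-- Assumption (ii): the zero set of the energy. -/
def MinimalOnSO (d : ℕ) (A : Matrix (Fin d) (Fin d) ℝ) (W : CellMat d → ℝ) : Prop :=
  ∀ G : CellMat d, W G = 0 ↔ ∃ R : Matrix (Fin d) (Fin d) ℝ, IsSO R ∧
    ∃ c : Fin d → ℝ, G = rotCell R (Zmat d A) + transCell c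

/-- Assumption (iii), smoothness part: `W` continuous and `C²` near `SO̅(d)`. -/
def SmoothNearSO (d : ℕ) (A : Matrix (Fin d) (Fin d) ℝ) (W : CellMat d → ℝ) : Prop :=
  Continuous W ∧ ∃ U : Set (CellMat d), IsOpen U ∧ SObar d A ⊆ U ∧ ContDiffOn ℝ 2 W U

/-- Assumption (iii), positivity part: `Q_cell` positive definite orthogonally to
translations and infinitesimal rotations. -/
def HessPosDef (d : ℕ) (A : Matrix (Fin d) (Fin d) ℝ) (W : CellMat d → ℝ) : Prop :=
  ∀ G : CellMat d, G ≠ 0 → (∀ c : Fin d → ℝ, frobInner G (transCell c) = 0) →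
    (∀ H : Matrix (Fin d) (Fin d) ℝ, H.transpose = -H → frobInner G (rotCell H (Zmat d A)) = 0) →
    0 < Qcell d A W G

/-- a partition `𝒵 = 𝒵₁ ∪̇ … ∪̇ 𝒵ₙ` of the corners. -/
def IsCellPartition {d n : ℕ} (P : Fin n → Finset (Fin d → Bool)) : Prop :=
  (∀ i, (P i).Nonempty) ∧ (∀ i j, i ≠ j → Disjoint (P i) (P j)) ∧
    Finset.univ.biUnion P = Finset.univ

/-- `(1/2) Σ_{i≠j} Σ_{z_s ∈ 𝒵ᵢ} Σ_{z_t ∈ 𝒵ⱼ} β(z_s,z_t)`. -/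
def crossSum {d n : ℕ} (β : (Fin d → Bool) → (Fin d → Bool) → ℝ)
    (P : Fin n → Finset (Fin d → Bool)) : ℝ :=
  (1 / 2) * ∑ i, ∑ j, if i = j then 0 else ∑ s ∈ P i, ∑ t ∈ P j, β s t

/-- `M ≤ d(G;𝒵ᵢ,𝒵ⱼ)` for all `i ≠ j`. -/
def Separated {d n : ℕ} (M : ℝ) (P : Fin n → Finset (Fin d → Bool)) (G : CellMat d) : Prop :=
  ∀ i j, i ≠ j → ∀ s ∈ P i, ∀ t ∈ P j, M ≤ eunorm (fun jj => G jj s - G jj t)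

/-- `G[𝒵ᵢ]`. -/
def restrictCols {d n : ℕ} (P : Fin n → Finset (Fin d → Bool)) (G : CellMat d) (i : Fin n) :
    {b // b ∈ P i} → Fin d → ℝ := fun b jj => G jj b.1

/-- Assumption (iv): decomposition into pair interactions at large separation,
with the compatibility condition near `SO̅(d)`. -/
def PairDecomposition (d : ℕ) (A : Matrix (Fin d) (Fin d) ℝ) (W : CellMat d → ℝ)
    (β : (Fin d → Bool) → (Fin d → Bool) → ℝ) : Prop :=
  ∀ (n : ℕ), 2 ≤ n → ∀ P : Fin n → Finset (Fin d → Bool), IsCellPartition P →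
    ∃ Wc : (i : Fin n) → ({b // b ∈ P i} → Fin d → ℝ) → ℝ,
      (∀ i v, 0 ≤ Wc i v) ∧
      (∀ δ : ℝ, 0 < δ → ∃ M : ℝ, ∀ G : CellMat d, Separated M P G →
        |W G - ((∑ i, Wc i (restrictCols P G i)) + crossSum β P)| ≤ δ) ∧
      (∃ C, 0 < C ∧ ∃ U : Set (CellMat d), IsOpen U ∧ SObar d A ⊆ U ∧
        ∀ H ∈ U, ∀ i, Wc i (restrictCols P H i) ≤ C * W H)

/-- the triple sum of assumption (iv) is strictly positive unless `n = 1`. -/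
def CrossPos (d : ℕ) (β : (Fin d → Bool) → (Fin d → Bool) → ℝ) : Prop :=
  ∀ (n : ℕ), 2 ≤ n → ∀ P : Fin n → Finset (Fin d → Bool), IsCellPartition P → 0 < crossSum β P

def dotp {n : ℕ} (v w : Fin n → ℝ) : ℝ := ∑ i, v i * w i

/-- the set of interaction directions `𝒱 = A{-1,0,1}^d \ {0}`. -/
def Vfin (d : ℕ) (A : Matrix (Fin d) (Fin d) ℝ) : Finset (Fin d → ℝ) :=
  ((Finset.univ : Finset (Fin d → Fin 3)).image fun t =>
    A.mulVec fun i => ((t i : ℕ) : ℝ) - 1).erase 0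

/-- `(1/2) β(z_s,z_t) = 2^{k-d} β(ν)` whenever `z_s - z_t = ν`, `ν` having `k` non-zero entries. -/
def BetaNuCompat (d : ℕ) (A : Matrix (Fin d) (Fin d) ℝ)
    (β : (Fin d → Bool) → (Fin d → Bool) → ℝ) (βν : (Fin d → ℝ) → ℝ) : Prop :=
  ∀ s t : Fin d → Bool, s ≠ t →
    (1 / 2) * β s t =
      (2 : ℝ) ^ ((((Finset.univ.filter fun i => s i ≠ t i)).card : ℤ) - (d : ℤ)) *
        βν (A.mulVec fun i => cornerVec s i - cornerVec t i)

/-- `β_A = min_{ξ ≠ 0} Σ_ν β(ν)|ν·ξ| / |e₁·ξ|`. -/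
def betaA (d : ℕ) [NeZero d] (A : Matrix (Fin d) (Fin d) ℝ) (βν : (Fin d → ℝ) → ℝ) : ℝ :=
  sInf {q | ∃ ξ : Fin d → ℝ, ξ ≠ 0 ∧ ξ 0 ≠ 0 ∧
    q = (∑ ν ∈ Vfin d A, βν ν * |dotp ν ξ|) / |ξ 0|}

/-- `α_A`, characterized as the minimal value `Q̃(1)` of the reduced minimization problem. -/
def alphaA (d : ℕ) [NeZero d] (A : Matrix (Fin d) (Fin d) ℝ) (W : CellMat d → ℝ) : ℝ :=
  sInf {q | ∃ G : Matrix (Fin d) (Fin d) ℝ, G 0 0 = 1 ∧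
    q = Qcell d A W (matZ d A ((1 / 2 : ℝ) • (G + G.transpose)))}

def M1 (d : ℕ) (A : Matrix (Fin d) (Fin d) ℝ) (βν : (Fin d → ℝ) → ℝ) : ℝ :=
  sInf {m | ∃ ξ : Fin d → ℝ, eunorm ξ = 1 ∧ m = ∑ ν ∈ Vfin d A, βν ν * |dotp ν ξ|}

def M2 (d : ℕ) (A : Matrix (Fin d) (Fin d) ℝ) (βν : (Fin d → ℝ) → ℝ) : ℝ :=
  sSup {m | ∃ ξ : Fin d → ℝ, eunorm ξ = 1 ∧ m = ∑ ν ∈ Vfin d A, βν ν * |dotp ν ξ|}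

/-! lattice geometry: the (translated) lattice `ε(ρ + A(k + u))`. -/

def latPt (d : ℕ) (A : Matrix (Fin d) (Fin d) ℝ) (ε : ℝ) (rv : Fin d → ℝ) (k : Fin d → ℤ)
    (u : Fin d → ℝ) : Fin d → ℝ :=
  ε • A.mulVec fun i => rv i + (k i : ℝ) + u i

def cellCorner (d : ℕ) (A : Matrix (Fin d) (Fin d) ℝ) (ε : ℝ) (rv : Fin d → ℝ) (k : Fin d → ℤ)
    (b : Fin d → Bool) : Fin d → ℝ :=
  latPt d A ε rv k fun i => if b i then 1 else 0

/-- the discrete gradient `∇̄y = ε⁻¹(y₁ - ȳ, …, y_{2^d} - ȳ)` on the cell with index `k`. -/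
def dgrad (d : ℕ) (A : Matrix (Fin d) (Fin d) ℝ) (ε : ℝ) (rv : Fin d → ℝ)
    (y : (Fin d → ℝ) → Fin d → ℝ) (k : Fin d → ℤ) : CellMat d :=
  fun j b =>
    (y (cellCorner d A ε rv k b) j -
      (∑ b' : Fin d → Bool, y (cellCorner d A ε rv k b') j) / 2 ^ d) / ε

/-- the piecewise affine interpolation on the reference cube `[0,1]^n`, obtained inductively
over face dimension through the barycenters of the faces.  On each simplex of the associated
barycentric decomposition it is the affine interpolation of the corner/barycenter values; it is
computed here radially from the barycenter. -/
def cubeInterp : (n : ℕ) → ((Fin n → Bool) → ℝ) → (Fin n → ℝ) → ℝ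
  | 0, f, _ => f fun i => i.elim0
  | n + 1, f, x =>
    let c : ℝ := (∑ b : Fin (n + 1) → Bool, f b) / 2 ^ (n + 1)
    have h : ∃ i : Fin (n + 1), ∀ j : Fin (n + 1), |x j - 1 / 2| ≤ |x i - 1 / 2| :=
      Finite.exists_max fun i => |x i - 1 / 2|
    let i0 := Classical.choose h
    let t := 2 * |x i0 - 1 / 2|
    if t = 0 then c
    else
      (1 - t) * c +
        t * cubeInterp n (fun bb => f (i0.insertNth (if (1 : ℝ) / 2 < x i0 then true else false) bb))
          (fun j => 1 / 2 + (x (i0.succAbove j) - 1 / 2) / t)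

/-- the index of the lattice cell containing `x`. -/
def cellIndex (d : ℕ) (A : Matrix (Fin d) (Fin d) ℝ) (ε : ℝ) (rv : Fin d → ℝ)
    (x : Fin d → ℝ) : Fin d → ℤ :=
  fun i => ⌊(ε • A)⁻¹.mulVec x i - rv i⌋

/-- the reference coordinate (in `[0,1)^d`) of `x` inside its cell. -/
def refCoord (d : ℕ) (A : Matrix (Fin d) (Fin d) ℝ) (ε : ℝ) (rv : Fin d → ℝ)
    (x : Fin d → ℝ) : Fin d → ℝ :=
  fun i => (ε • A)⁻¹.mulVec x i - rv i - (cellIndex d A ε rv x i : ℝ)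

/-- a cell is intact if `diam{∇̄y, 𝒵} ≤ C_int`. -/
def IntactCell (d : ℕ) (A : Matrix (Fin d) (Fin d) ℝ) (ε : ℝ) (rv : Fin d → ℝ) (Cint : ℝ)
    (y : (Fin d → ℝ) → Fin d → ℝ) (k : Fin d → ℤ) : Prop :=
  ∀ b b' : Fin d → Bool,
    eunorm (fun jj => y (cellCorner d A ε rv k b) jj - y (cellCorner d A ε rv k b') jj) ≤ Cint * ε

/-- the interpolation `ỹ`: the simplicial interpolation on intact cells; on broken cells,
componentwise the simplicial interpolation where `diam_i ≤ C_int` and the affine fallback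
`ỹ^i(x) = y^i(z₁) + (x - z₁)_i` otherwise. -/
def tildey (d : ℕ) (A : Matrix (Fin d) (Fin d) ℝ) (ε : ℝ) (rv : Fin d → ℝ) (Cint : ℝ)
    (y : (Fin d → ℝ) → Fin d → ℝ) (x : Fin d → ℝ) : Fin d → ℝ := fun j =>
  let k := cellIndex d A ε rv x
  if IntactCell d A ε rv Cint y k then
    cubeInterp d (fun b => y (cellCorner d A ε rv k b) j) (refCoord d A ε rv x)
  else if ∀ b b' : Fin d → Bool,
      |y (cellCorner d A ε rv k b) j - y (cellCorner d A ε rv k b') j| ≤ Cint * ε then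
    cubeInterp d (fun b => y (cellCorner d A ε rv k b) j) (refCoord d A ε rv x)
  else
    y (cellCorner d A ε rv k fun _ => false) j + (x j - cellCorner d A ε rv k (fun _ => false) j)

/-- the mesoscopic exponent `s = (3d-1)/(3d)`. -/
def sExp (d : ℕ) : ℝ := (3 * d - 1) / (3 * d)


/-! the mesoscopic cell `U_ε = (0,ℓ) × (0,w)^{d-1}` and its energies. -/

def Ubox (d : ℕ) [NeZero d] (ℓ w : ℝ) : Set (Fin d → ℝ) :=
  {x | x 0 ∈ Ioo 0 ℓ ∧ ∀ i : Fin d, i ≠ 0 → x i ∈ Ioo 0 w}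

/-- inner cells: the closure of the cell is contained in `U_ε`. -/
def InnerCellM (d : ℕ) [NeZero d] (A : Matrix (Fin d) (Fin d) ℝ) (ε : ℝ) (rv : Fin d → ℝ)
    (ℓ w : ℝ) (k : Fin d → ℤ) : Prop :=
  ∀ u : Fin d → ℝ, (∀ i, u i ∈ Icc (0 : ℝ) 1) → latPt d A ε rv k u ∈ Ubox d ℓ w

def tailCoords (d : ℕ) (x : Fin d → ℝ) : Fin (d - 1) → ℝ := fun i => x ⟨i.1 + 1, by omega⟩

def consd (d : ℕ) [NeZero d] (a : ℝ) (x' : Fin (d - 1) → ℝ) : Fin d → ℝ :=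
  fun j => if h : (j : ℕ) = 0 then a else x' ⟨(j : ℕ) - 1, by omega⟩

/-- the boundary faces `{0,ℓ} × w·Ws`. -/
def FaceSet (d : ℕ) [NeZero d] (ℓ w : ℝ) (Ws : Set (Fin (d - 1) → ℝ)) : Set (Fin d → ℝ) :=
  {x | (x 0 = 0 ∨ x 0 = ℓ) ∧ tailCoords d x ∈ w • Ws}

/-- cells whose closure meets the boundary faces `{0,ℓ} × w·Ws`. -/
def BoundaryCellM (d : ℕ) [NeZero d] (A : Matrix (Fin d) (Fin d) ℝ) (ε : ℝ) (rv : Fin d → ℝ)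
    (ℓ w : ℝ) (Ws : Set (Fin (d - 1) → ℝ)) (k : Fin d → ℤ) : Prop :=
  ∃ u : Fin d → ℝ, (∀ i, u i ∈ Icc (0 : ℝ) 1) ∧ latPt d A ε rv k u ∈ FaceSet d ℓ w Ws

/-- `E(U_ε, y)`: sum of the cell energies over the inner cells plus one half of the sum over
the boundary cells. -/
def EnergyMeso (d : ℕ) [NeZero d] (A : Matrix (Fin d) (Fin d) ℝ) (Wcell : CellMat d → ℝ)
    (ε : ℝ) (rv : Fin d → ℝ) (ℓ w : ℝ) (Ws : Set (Fin (d - 1) → ℝ))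
    (y : (Fin d → ℝ) → Fin d → ℝ) : ℝ :=
  ε ^ (d - 1) *
    ((∑' k : Fin d → ℤ, if InnerCellM d A ε rv ℓ w k then Wcell (dgrad d A ε rv y k) else 0) +
      (1 / 2) * ∑' k : Fin d → ℤ,
        if BoundaryCellM d A ε rv ℓ w Ws k then Wcell (dgrad d A ε rv y k) else 0)

/-- a cell is `1`-broken if `diam₁{∇̄y, 𝒵} > C*_int`. -/
def OneBroken (d : ℕ) [NeZero d] (A : Matrix (Fin d) (Fin d) ℝ) (ε : ℝ) (rv : Fin d → ℝ)
    (Cstar : ℝ) (y : (Fin d → ℝ) → Fin d → ℝ) (k : Fin d → ℤ) : Prop :=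
  ∃ b b' : Fin d → Bool,
    Cstar * ε < |y (cellCorner d A ε rv k b) 0 - y (cellCorner d A ε rv k b') 0|

/-- the (half open) cell with index `k`. -/
def cellRegion (d : ℕ) (A : Matrix (Fin d) (Fin d) ℝ) (ε : ℝ) (rv : Fin d → ℝ)
    (k : Fin d → ℤ) : Set (Fin d → ℝ) :=
  {x | ∃ u : Fin d → ℝ, (∀ i, u i ∈ Ico (0 : ℝ) 1) ∧ x = latPt d A ε rv k u}

/-- the averaged boundary condition
`(1/(w^{d-1}|W|)) ∫_{w·W} (ỹ¹(ℓ,x') - ỹ¹(0,x')) dx' = ℓ(1+r)`. -/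
def AvgBC (d : ℕ) [NeZero d] (A : Matrix (Fin d) (Fin d) ℝ) (ε : ℝ) (rv : Fin d → ℝ)
    (Cstar ℓ w : ℝ) (Ws : Set (Fin (d - 1) → ℝ)) (y : (Fin d → ℝ) → Fin d → ℝ) (r : ℝ) : Prop :=
  (∫ x' in w • Ws,
      (tildey d A ε rv Cstar y (consd d ℓ x') 0 - tildey d A ε rv Cstar y (consd d 0 x') 0)) =
    w ^ (d - 1) * (volume Ws).toReal * (ℓ * (1 + r))

/-- no `1`-broken cell meets the boundary faces `{0,ℓ} × w·W̃`. -/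
def NoBrokenFace (d : ℕ) [NeZero d] (A : Matrix (Fin d) (Fin d) ℝ) (ε : ℝ) (rv : Fin d → ℝ)
    (Cstar ℓ w : ℝ) (Wts : Set (Fin (d - 1) → ℝ)) (y : (Fin d → ℝ) → Fin d → ℝ) : Prop :=
  ∀ k : Fin d → ℤ, OneBroken d A ε rv Cstar y k →
    cellRegion d A ε rv k ∩ FaceSet d ℓ w Wts = ∅

/-- the mesoscopic minimization problem `M(U_ε, r)`. -/
def Mmeso (d : ℕ) [NeZero d] (A : Matrix (Fin d) (Fin d) ℝ) (Wcell : CellMat d → ℝ)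
    (ε : ℝ) (rv : Fin d → ℝ) (Cstar ℓ w : ℝ) (Wts Ws : Set (Fin (d - 1) → ℝ)) (r : ℝ) : ℝ :=
  sInf {e | ∃ y : (Fin d → ℝ) → Fin d → ℝ,
    AvgBC d A ε rv Cstar ℓ w Ws y r ∧ NoBrokenFace d A ε rv Cstar ℓ w Wts y ∧
    e = EnergyMeso d A Wcell ε rv ℓ w Ws y}

def einfDist {n : ℕ} (x : Fin n → ℝ) (S : Set (Fin n → ℝ)) : ℝ :=
  sInf {t | ∃ z ∈ S, t = eunorm fun i => x i - z i}

/-- the condition (W form): a connected subset of `(0,1)^{d-1}` of measure in `(1/2, 1]` whose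
boundary has `H^{d-2}`-measure `< D`. -/
def WFormP (d : ℕ) (D : ℝ) (S : Set (Fin (d - 1) → ℝ)) : Prop :=
  (∀ x ∈ S, ∀ i, x i ∈ Ioo (0 : ℝ) 1) ∧ IsConnected S ∧
    1 / 2 < (volume S).toReal ∧ (volume S).toReal ≤ 1 ∧
    μH[(d : ℝ) - 2] (frontier S) < ENNReal.ofReal D

/-- the subset of `W̃` of points of distance `> D'ε^{1-s}` from `∂W̃`. -/
def coreSet (d : ℕ) (D' ε : ℝ) (Wts : Set (Fin (d - 1) → ℝ)) : Set (Fin (d - 1) → ℝ) :=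
  {x ∈ Wts | D' * ε ^ (1 - sExp d) < einfDist x (frontier Wts)}

/-- `W` is the connected component of largest Lebesgue measure of `coreSet`. -/
def LargestComp (d : ℕ) (D' ε : ℝ) (Wts Ws : Set (Fin (d - 1) → ℝ)) : Prop :=
  ∃ x₀ ∈ coreSet d D' ε Wts, Ws = connectedComponentIn (coreSet d D' ε Wts) x₀ ∧
    ∀ x ∈ coreSet d D' ε Wts, volume (connectedComponentIn (coreSet d D' ε Wts) x) ≤ volume Ws

/-- the admissible pairs `(W̃, W)`. -/
def AdmissiblePair (d : ℕ) (D D' ε : ℝ) (Wts Ws : Set (Fin (d - 1) → ℝ)) : Prop :=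
  WFormP d D Wts ∧ LargestComp d D' ε Wts Ws ∧ WFormP d D Ws

/-! the macroscopic body `Ω = (0,l₁) × … × (0,l_d)`. -/

def OmegaBox (d : ℕ) (l : Fin d → ℝ) : Set (Fin d → ℝ) := {x | ∀ i, x i ∈ Ioo 0 (l i)}

def InnerCellOmega (d : ℕ) (A : Matrix (Fin d) (Fin d) ℝ) (ε : ℝ) (l : Fin d → ℝ)
    (k : Fin d → ℤ) : Prop :=
  ∀ u : Fin d → ℝ, (∀ i, u i ∈ Icc (0 : ℝ) 1) → latPt d A ε 0 k u ∈ OmegaBox d l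

/-- the rescaled energy `𝓔_ε(y) = ε^{d-1} Σ_{inner cells} W_cell(∇̄y)`. -/
def EnergyOmega (d : ℕ) (A : Matrix (Fin d) (Fin d) ℝ) (Wcell : CellMat d → ℝ) (ε : ℝ)
    (l : Fin d → ℝ) (y : (Fin d → ℝ) → Fin d → ℝ) : ℝ :=
  ε ^ (d - 1) * ∑' k : Fin d → ℤ,
    if InnerCellOmega d A ε l k then Wcell (dgrad d A ε 0 y k) else 0

/-- `l_A = Σ_j |v_j · e₁|`. -/
def lA (d : ℕ) [NeZero d] (A : Matrix (Fin d) (Fin d) ℝ) : ℝ := ∑ j, |A 0 j|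

/-- the boundary condition of the class `𝒜(a_ε)`:
`y¹(x) = (1+a)x₁` for lattice points `x ∈ Ω` with `x₁ ≤ 2l_Aε` or `x₁ ≥ l₁ - 2l_Aε`. -/
def BdryCondA (d : ℕ) [NeZero d] (A : Matrix (Fin d) (Fin d) ℝ) (ε : ℝ) (l : Fin d → ℝ)
    (a : ℝ) (y : (Fin d → ℝ) → Fin d → ℝ) : Prop :=
  ∀ k : Fin d → ℤ, latPt d A ε 0 k 0 ∈ OmegaBox d l →
    ((latPt d A ε 0 k 0) 0 ≤ 2 * lA d A * ε ∨ l 0 - 2 * lA d A * ε ≤ (latPt d A ε 0 k 0) 0) →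
    y (latPt d A ε 0 k 0) 0 = (1 + a) * (latPt d A ε 0 k 0) 0

/-- `inf {𝓔_ε(y) : y ∈ 𝒜(a_ε)}`. -/
def minEnergy (d : ℕ) [NeZero d] (A : Matrix (Fin d) (Fin d) ℝ) (Wcell : CellMat d → ℝ)
    (ε : ℝ) (l : Fin d → ℝ) (a : ℝ) : ℝ :=
  sInf {e | ∃ y : (Fin d → ℝ) → Fin d → ℝ,
    BdryCondA d A ε l a y ∧ e = EnergyOmega d A Wcell ε l y}

/-! helpers for the interpolation lemmas. -/

/-- the simplicial interpolation on the single cell with index `k`. -/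
def cellInterp (d : ℕ) (A : Matrix (Fin d) (Fin d) ℝ) (ε : ℝ) (rv : Fin d → ℝ)
    (y : (Fin d → ℝ) → Fin d → ℝ) (k : Fin d → ℤ) (x : Fin d → ℝ) : Fin d → ℝ :=
  fun j => cubeInterp d (fun b => y (cellCorner d A ε rv k b) j)
    (fun i => (ε • A)⁻¹.mulVec x i - rv i - (k i : ℝ))

/-- the gradient of a map `ℝ^d → ℝ^d` as a `d×d` array. -/
def gradM (d : ℕ) (f : (Fin d → ℝ) → Fin d → ℝ) (x : Fin d → ℝ) : Fin d → Fin d → ℝ :=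
  fun j i => fderiv ℝ f x (Pi.single i 1) j

def sqnorm (d : ℕ) (F : Fin d → Fin d → ℝ) : ℝ := Real.sqrt (∑ j, ∑ i, F j i ^ 2)

/-- Euclidean distance of a `d×d` matrix to `SO(d)`. -/
def distSO (d : ℕ) (F : Fin d → Fin d → ℝ) : ℝ :=
  sInf {t | ∃ R : Matrix (Fin d) (Fin d) ℝ, IsSO R ∧ t = sqnorm d fun j i => F j i - R j i}

/-- `∇̄y` as a (piecewise constant) function on `ℝ^d`. -/
def dgradFun (d : ℕ) (A : Matrix (Fin d) (Fin d) ℝ) (ε : ℝ) (rv : Fin d → ℝ)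
    (y : (Fin d → ℝ) → Fin d → ℝ) (x : Fin d → ℝ) : CellMat d :=
  dgrad d A ε rv y (cellIndex d A ε rv x)

/-- the directional interpolation `ȳ_ν` on the cells `ε D^ν(λ + [0,1)^d)`. -/
def barInterp (d : ℕ) [NeZero d] (ε Cint : ℝ) (Dν : Matrix (Fin d) (Fin d) ℝ) (ν : Fin d → ℝ)
    (y : (Fin d → ℝ) → Fin d → ℝ) (x : Fin d → ℝ) : Fin d → ℝ :=
  let u := (ε • Dν)⁻¹.mulVec x
  let x0 := ε • Dν.mulVec fun i => (⌊u i⌋ : ℝ)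
  let x1 := fun i => x0 i + ε * ν i
  if eunorm (fun j => y x1 j - y x0 j) ≤ Cint * ε then
    fun j => (1 - (u 0 - (⌊u 0⌋ : ℝ))) * y x0 j + (u 0 - (⌊u 0⌋ : ℝ)) * y x1 j
  else y x0

end Cleavage

namespace Cleavage

/-!
Where no fallback is used, both interpolations at `x` are componentwise convex combinations of
values of `y` at lattice points within a bounded index distance of the cell of `x`: for `ȳ_ν` this
holds because `D^ν = A T` with an integer matrix `T`, so that the directional nodes lie on the
sublattice `T ℤᵈ`. If all cells within that distance are intact, neighbouring values differ by at
most `C_int ε`, hence both interpolations are `O(ε)`-close to the value at the corner of the cell.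
This can only fail near a broken cell, on a set of measure `O(#C̄'_ε ε^d) = O(ε)`, or within
distance `O(ε)` of the complement of `U`, on a set whose part in `U` has vanishing measure.
-/

open scoped Matrix Matrix.Norms.Operator

section Generalities

theorem tendstoInMeasure_of_edist_le_off {α E ι : Type*} [MeasurableSpace α] [EDist E]
    {μ : Measure α} {f : ι → α → E} {g : α → E} {l : Filter ι} {bad : ι → Set α} {r : ι → ℝ≥0∞}
    (hr : Tendsto r l (nhds 0)) (hbad : Tendsto (fun n => μ (bad n)) l (nhds 0))
    (h : ∀ᶠ n in l, ∀ x ∉ bad n, edist (f n x) (g x) ≤ r n) :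
    TendstoInMeasure μ f l g := by
  intro δ hδ
  refine tendsto_of_tendsto_of_tendsto_of_le_of_le' tendsto_const_nhds hbad
    (Eventually.of_forall fun _ => zero_le) ?_
  filter_upwards [hr.eventually (gt_mem_nhds hδ), h] with n hrn hn
  refine measure_mono fun x hx => ?_
  by_contra hxbad
  exact (hx.trans (hn x hxbad)).not_gt hrn

theorem norm_le_eunorm {n : ℕ} (v : Fin n → ℝ) : ‖v‖ ≤ eunorm v :=
  (pi_norm_le_iff_of_nonneg (Real.sqrt_nonneg _)).2 fun i =>
    Real.abs_le_sqrt (Finset.single_le_sum (fun j _ => sq_nonneg (v j)) (Finset.mem_univ i))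

theorem dist_intCast_pi {ι : Type*} [Fintype ι] (k m : ι → ℤ) :
    dist (fun i => (k i : ℝ)) (fun i => (m i : ℝ)) = dist k m := by
  simp only [dist_pi_def, nndist_dist, Int.dist_cast_real]

theorem dist_le_one_of_mem_Icc {ι : Type*} [Fintype ι] {u v : ι → ℝ}
    (hu : u ∈ Icc (0 : ι → ℝ) 1) (hv : v ∈ Icc (0 : ι → ℝ) 1) : dist u v ≤ 1 :=
  (dist_pi_le_iff zero_le_one).2 fun i =>
    Real.dist_le_of_mem_Icc_01 ⟨hu.1 i, hu.2 i⟩ ⟨hv.1 i, hv.2 i⟩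

theorem dist_int_pi_le_natCast_iff {ι : Type*} [Fintype ι] {m k : ι → ℤ} {n : ℕ} :
    dist m k ≤ n ↔ ∀ i, |m i - k i| ≤ n := by
  simp only [dist_pi_le_iff n.cast_nonneg, Int.dist_eq]
  exact_mod_cast Iff.rfl

/-- Every nonzero coordinate of `m - k` moves one step towards `0`. -/
theorem exists_unit_cell_toward {ι : Type*} [Fintype ι] {m k : ι → ℤ} {n : ℕ}
    (hm : dist m k ≤ (n + 1 : ℕ)) :
    ∃ m' q : ι → ℤ, dist m' k ≤ n ∧ dist q k ≤ (n + 1 : ℕ) ∧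
      m ∈ Icc q (q + 1) ∧ m' ∈ Icc q (q + 1) := by
  simp only [dist_int_pi_le_natCast_iff, abs_le] at hm ⊢
  set m' : ι → ℤ := fun i => m i - (m i - k i).sign with hm'
  have hcases (i : ι) : m' i = m i ∧ m i = k i ∨ m' i = m i + 1 ∧ m i < k i ∨
      m' i = m i - 1 ∧ k i < m i := by
    rcases lt_trichotomy (m i) (k i) with h | h | h
    · simp [hm', Int.sign_eq_neg_one_of_neg (sub_neg.2 h), h]
    · simp [hm', h]
    · simp [hm', Int.sign_eq_one_of_pos (sub_pos.2 h), h]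
  refine ⟨m', m ⊓ m', fun i => ?_, fun i => ?_, ⟨inf_le_left, fun i => ?_⟩,
    ⟨inf_le_right, fun i => ?_⟩⟩ <;>
    have := hm i <;> have := hcases i
  · omega
  all_goals
    simp only [Pi.inf_apply, Pi.add_apply, Pi.one_apply]
    omega

theorem dist_le_mul_of_dist_le_on_unit_cells {ι E : Type*} [Fintype ι] [PseudoMetricSpace E]
    {g : (ι → ℤ) → E} {C : ℝ} {k : ι → ℤ} {N : ℕ}
    (hg : ∀ q, dist q k ≤ N → ∀ m ∈ Icc q (q + 1), ∀ m' ∈ Icc q (q + 1), dist (g m) (g m') ≤ C)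
    {n : ℕ} (hn : n ≤ N) {m : ι → ℤ} (hm : dist m k ≤ n) : dist (g m) (g k) ≤ n * C := by
  induction n generalizing m with
  | zero =>
    obtain rfl : m = k := dist_le_zero.1 (by simpa using hm)
    simp
  | succ n ih =>
    obtain ⟨m', q, hm'k, hqk, hmq, hm'q⟩ := exists_unit_cell_toward hm
    calc dist (g m) (g k) ≤ dist (g m) (g m') + dist (g m') (g k) := dist_triangle _ _ _
      _ ≤ C + n * C :=
        add_le_add (hg q (hqk.trans (Nat.cast_le.2 hn)) m hmq m' hm'q) (ih (by omega) hm'k)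
      _ = (n + 1 : ℕ) * C := by push_cast; ring

theorem tendsto_measure_restrict_cthickening_compl {α ι : Type*} [PseudoEMetricSpace α]
    [MeasurableSpace α] [OpensMeasurableSpace α] {μ : Measure α} {U : Set α}
    (hU : μ U ≠ ∞) (hUint : μ (U \ interior U) = 0) {l : Filter ι} {r : ι → ℝ}
    (hr : Tendsto r l (nhds 0)) :
    Tendsto (fun n => μ.restrict U (Metric.cthickening (r n) Uᶜ)) l (nhds 0) := by
  have : Fact (μ U < ∞) := ⟨hU.lt_top⟩
  have hclosure : μ.restrict U (closure Uᶜ) = 0 := by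
    rwa [Measure.restrict_apply isClosed_closure.measurableSet, closure_compl, inter_comm,
      ← sdiff_eq]
  have h := tendsto_measure_cthickening (s := Uᶜ) ⟨1, one_pos, measure_ne_top (μ.restrict U) _⟩
  rw [hclosure] at h
  exact h.comp hr

theorem tendsto_mul_pow_of_le_rpow_one_sub {ι : Type*} {l : Filter ι} {a ε : ι → ℝ} {C : ℝ}
    {d : ℕ} (hε : Tendsto ε l (nhdsWithin 0 (Ioi 0))) (ha0 : ∀ n, 0 ≤ a n)
    (ha : ∀ n, a n ≤ C * ε n ^ ((1 : ℝ) - d)) :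
    Tendsto (fun n => a n * ε n ^ d) l (nhds 0) := by
  obtain ⟨hε0, hεpos⟩ := tendsto_nhdsWithin_iff.1 hε
  have hlim : Tendsto (fun n => C * ε n) l (nhds 0) := by simpa using hε0.const_mul C
  refine tendsto_of_tendsto_of_tendsto_of_le_of_le' tendsto_const_nhds hlim ?_ ?_
  · filter_upwards [hεpos] with n hn
    exact mul_nonneg (ha0 n) (pow_nonneg (mem_Ioi.1 hn).le d)
  · filter_upwards [hεpos] with n hn
    calc a n * ε n ^ d ≤ C * ε n ^ ((1 : ℝ) - d) * ε n ^ d :=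
          mul_le_mul_of_nonneg_right (ha n) (pow_nonneg (mem_Ioi.1 hn).le d)
      _ = C * ε n := by
          rw [mul_assoc, ← Real.rpow_add_natCast (mem_Ioi.1 hn).ne', sub_add_cancel, Real.rpow_one]

end Generalities

section CubeInterpolation

/-- The radial recursion without its case distinction: at the barycenter the parameter of `lineMap`
is `0` and the junk point `(x - 1/2) / 0` does not matter. -/
theorem exists_cubeInterp_succ_eq_lineMap {n : ℕ} (f : (Fin (n + 1) → Bool) → ℝ)
    (x : Fin (n + 1) → ℝ) :
    ∃ (i : Fin (n + 1)) (b : Bool), (∀ j, |x j - 1 / 2| ≤ |x i - 1 / 2|) ∧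
      cubeInterp (n + 1) f x = AffineMap.lineMap ((∑ s, f s) / 2 ^ (n + 1))
        (cubeInterp n (fun s => f (i.insertNth b s))
          fun j => 1 / 2 + (x (i.succAbove j) - 1 / 2) / (2 * |x i - 1 / 2|))
        (2 * |x i - 1 / 2|) := by
  have h : ∃ i, ∀ j, |x j - 1 / 2| ≤ |x i - 1 / 2| := Finite.exists_max fun i => |x i - 1 / 2|
  refine ⟨Classical.choose h, if 1 / 2 < x (Classical.choose h) then true else false,
    Classical.choose_spec h, ?_⟩
  rw [cubeInterp, AffineMap.lineMap_apply_ring]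
  split_ifs with ht <;> simp_all

theorem cubeInterp_mem_of_convex {n : ℕ} {s : Set ℝ} (hs : Convex ℝ s)
    {f : (Fin n → Bool) → ℝ} (hf : ∀ b, f b ∈ s) {x : Fin n → ℝ} (hx : x ∈ Icc (0 : Fin n → ℝ) 1) :
    cubeInterp n f x ∈ s := by
  induction n with
  | zero => exact hf _
  | succ n ih =>
    obtain ⟨i, b, hmax, heq⟩ := exists_cubeInterp_succ_eq_lineMap f x
    have abs_sub_half_le : |x i - 1 / 2| ≤ 1 / 2 := by
      have h0 : 0 ≤ x i := hx.1 i
      have h1 : x i ≤ 1 := hx.2 i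
      exact abs_le.2 ⟨by linarith, by linarith⟩
    have average_mem : (∑ b, f b) / 2 ^ (n + 1) ∈ s := by
      rw [Finset.sum_div]
      simpa only [smul_eq_mul, inv_mul_eq_div] using
        hs.sum_mem (t := Finset.univ) (w := fun _ => ((2 : ℝ) ^ (n + 1))⁻¹)
          (fun _ _ => by positivity) (by simp) fun b _ => hf b
    have face_coord_mem : (fun j => 1 / 2 + (x (i.succAbove j) - 1 / 2) / (2 * |x i - 1 / 2|)) ∈
        Icc (0 : Fin n → ℝ) 1 := by
      have h (j : Fin n) : |(x (i.succAbove j) - 1 / 2) / (2 * |x i - 1 / 2|)| ≤ 1 / 2 := by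
        rw [abs_div, abs_of_nonneg (by positivity : 0 ≤ 2 * |x i - 1 / 2|)]
        exact div_le_of_le_mul₀ (by positivity) (by positivity) (by linarith [hmax (i.succAbove j)])
      exact ⟨fun j => by simp only [Pi.zero_apply]; linarith [(abs_le.1 (h j)).1],
        fun j => by simp only [Pi.one_apply]; linarith [(abs_le.1 (h j)).2]⟩
    rw [heq]
    exact hs.lineMap_mem average_mem (ih (fun s => hf _) face_coord_mem)
      ⟨by positivity, by linarith⟩

end CubeInterpolation

section LatticeCoordinates

variable {d : ℕ} {A : Matrix (Fin d) (Fin d) ℝ} {ε : ℝ} {rv : Fin d → ℝ} {x : Fin d → ℝ}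

/-- The coordinates of a point with respect to the lattice `ε(ρ + Aℤᵈ)`; `cellIndex` and `refCoord`
are their integer and fractional parts. -/
def latticeCoord (A : Matrix (Fin d) (Fin d) ℝ) (ε : ℝ) (rv x : Fin d → ℝ) : Fin d → ℝ :=
  (ε • A)⁻¹ *ᵥ x - rv

theorem isUnit_det_smul (hA : A.det ≠ 0) (hε : ε ≠ 0) : IsUnit (ε • A).det := by
  rw [Matrix.det_smul]
  exact (mul_ne_zero (pow_ne_zero _ hε) hA).isUnit

theorem cellIndex_add_refCoord (x : Fin d → ℝ) :
    (fun i => (cellIndex d A ε rv x i : ℝ)) + refCoord d A ε rv x = latticeCoord A ε rv x := by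
  ext i
  simp [refCoord, latticeCoord]

theorem refCoord_mem_Icc (x : Fin d → ℝ) : refCoord d A ε rv x ∈ Icc (0 : Fin d → ℝ) 1 :=
  ⟨fun _ => Int.fract_nonneg _, fun _ => (Int.fract_lt_one _).le⟩

theorem latPt_cellIndex_refCoord (hA : A.det ≠ 0) (hε : ε ≠ 0) (x : Fin d → ℝ) :
    latPt d A ε rv (cellIndex d A ε rv x) (refCoord d A ε rv x) = x := by
  have hcoord : (fun i => rv i + cellIndex d A ε rv x i + refCoord d A ε rv x i) =
      (ε • A)⁻¹ *ᵥ x := by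
    ext i
    simp [refCoord]
  rw [latPt, hcoord, ← Matrix.smul_mulVec, Matrix.mulVec_mulVec,
    Matrix.mul_nonsing_inv _ (isUnit_det_smul hA hε), Matrix.one_mulVec]

theorem latPt_eq_cellCorner {q m : Fin d → ℤ} (hm : m ∈ Icc q (q + 1)) :
    latPt d A ε rv m 0 = cellCorner d A ε rv q fun i => decide (q i < m i) := by
  have hcorner (i : Fin d) : (m i : ℝ) = q i + if decide (q i < m i) = true then 1 else 0 := by
    have h0 : q i ≤ m i := hm.1 i
    have h1 : m i ≤ q i + 1 := hm.2 i
    split_ifs with h <;> simp only [decide_eq_true_eq] at h <;> norm_cast <;> omega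
  simp only [cellCorner, latPt, hcorner, Pi.zero_apply, add_zero, add_assoc]

theorem dist_latPt_le (k m : Fin d → ℤ) (u v : Fin d → ℝ) :
    dist (latPt d A ε rv k u) (latPt d A ε rv m v) ≤ |ε| * (‖A‖ * (dist k m + dist u v)) := by
  have hsub : latPt d A ε rv k u - latPt d A ε rv m v =
      ε • A *ᵥ (((fun i => (k i : ℝ)) - fun i => (m i : ℝ)) + (u - v)) := by
    simp only [latPt, ← smul_sub, ← Matrix.mulVec_sub]
    congr 2
    ext i
    simp only [Pi.sub_apply, Pi.add_apply]
    ring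
  rw [dist_eq_norm, hsub, norm_smul, Real.norm_eq_abs, ← dist_intCast_pi, dist_eq_norm,
    dist_eq_norm]
  gcongr
  exact (Matrix.linfty_opNorm_mulVec _ _).trans (by gcongr; exact norm_add_le _ _)

theorem dist_cellIndex_latticeCoord_le_one (x : Fin d → ℝ) :
    dist (fun i => (cellIndex d A ε rv x i : ℝ)) (latticeCoord A ε rv x) ≤ 1 := by
  rw [← cellIndex_add_refCoord, dist_self_add_right, ← dist_zero_left]
  exact dist_le_one_of_mem_Icc (left_mem_Icc.2 zero_le_one) (refCoord_mem_Icc x)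

theorem volume_preimage_latticeCoord (hA : A.det ≠ 0) (hε : ε ≠ 0) (s : Set (Fin d → ℝ)) :
    volume (latticeCoord A ε rv ⁻¹' s) = ENNReal.ofReal |(ε • A).det| * volume s := by
  have hdet : LinearMap.det (Matrix.toLin' (ε • A)⁻¹) ≠ 0 := by
    rw [LinearMap.det_toLin', Matrix.det_nonsing_inv]
    exact (isUnit_det_smul hA hε).ringInverse.ne_zero
  have hpre : latticeCoord A ε rv ⁻¹' s =
      Matrix.toLin' (ε • A)⁻¹ ⁻¹' ((fun w => w + -rv) ⁻¹' s) := by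
    ext x
    simp [latticeCoord, sub_eq_add_neg]
  rw [hpre, Measure.addHaar_preimage_linearMap volume hdet, measure_preimage_add_right,
    LinearMap.det_toLin', Matrix.det_nonsing_inv, Ring.inverse_eq_inv', inv_inv]

theorem measurable_latticeCoord : Measurable (latticeCoord A ε rv) :=
  (((ε • A)⁻¹.mulVecLin.continuous_of_finiteDimensional).sub continuous_const).measurable

theorem cellIndex_preimage_singleton (k : Fin d → ℤ) :
    cellIndex d A ε rv ⁻¹' {k} =
      latticeCoord A ε rv ⁻¹' univ.pi fun i => Ico (k i : ℝ) (k i + 1) := by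
  ext x
  simp only [mem_preimage, mem_singleton_iff, funext_iff, cellIndex, Int.floor_eq_iff, mem_univ_pi,
    mem_Ico]
  rfl

theorem volume_cellIndex_preimage_singleton (hA : A.det ≠ 0) (hε : ε ≠ 0) (k : Fin d → ℤ) :
    volume (cellIndex d A ε rv ⁻¹' {k}) = ENNReal.ofReal |(ε • A).det| := by
  simp [cellIndex_preimage_singleton, volume_preimage_latticeCoord hA hε, volume_pi_pi]

theorem volume_dist_cellIndex_le (hA : A.det ≠ 0) (hε : ε ≠ 0) (k : Fin d → ℤ) {r : ℝ}
    (hr : 0 ≤ r) :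
    volume {x | dist k (cellIndex d A ε rv x) ≤ r} ≤
      ENNReal.ofReal (|(ε • A).det| * (2 * (r + 1)) ^ d) := by
  have hsub : {x | dist k (cellIndex d A ε rv x) ≤ r} ⊆
      latticeCoord A ε rv ⁻¹' Metric.closedBall (fun i => (k i : ℝ)) (r + 1) := by
    intro x hx
    rw [mem_preimage, Metric.mem_closedBall']
    refine (dist_triangle _ (fun i => (cellIndex d A ε rv x i : ℝ)) _).trans ?_
    rw [dist_intCast_pi]
    exact add_le_add hx (dist_cellIndex_latticeCoord_le_one x)
  calc volume {x | dist k (cellIndex d A ε rv x) ≤ r}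
      ≤ volume (latticeCoord A ε rv ⁻¹' Metric.closedBall (fun i => (k i : ℝ)) (r + 1)) :=
        measure_mono hsub
    _ = ENNReal.ofReal (|(ε • A).det| * (2 * (r + 1)) ^ d) := by
        rw [volume_preimage_latticeCoord hA hε, Real.volume_pi_closedBall _ (by positivity),
          Fintype.card_fin, ENNReal.ofReal_mul (abs_nonneg _)]

theorem finite_setOf_cell_subset (hA : A.det ≠ 0) (hε : ε ≠ 0) {U : Set (Fin d → ℝ)}
    (hU : volume U ≠ ∞) :
    {k | ∀ u : Fin d → ℝ, (∀ i, u i ∈ Icc (0 : ℝ) 1) → latPt d A ε rv k u ∈ U}.Finite := by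
  set S := {k | ∀ u : Fin d → ℝ, (∀ i, u i ∈ Icc (0 : ℝ) 1) → latPt d A ε rv k u ∈ U}
  have cells_subset : (⋃ k : S, cellIndex d A ε rv ⁻¹' {(k : Fin d → ℤ)}) ⊆ U := by
    refine iUnion_subset fun k x (hx : cellIndex d A ε rv x = k) => ?_
    rw [← latPt_cellIndex_refCoord (rv := rv) hA hε x, hx]
    exact k.2 _ fun i => ⟨(refCoord_mem_Icc x).1 i, (refCoord_mem_Icc x).2 i⟩
  have hpos : 0 < ENNReal.ofReal |(ε • A).det| :=
    ENNReal.ofReal_pos.2 (abs_pos.2 (isUnit_det_smul hA hε).ne_zero)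
  have hfin := Measure.finite_const_le_meas_of_disjoint_iUnion volume hpos
    (As := fun k : S => cellIndex d A ε rv ⁻¹' {(k : Fin d → ℤ)})
    (fun k => by
      rw [cellIndex_preimage_singleton]
      exact measurable_latticeCoord (MeasurableSet.univ_pi fun _ => measurableSet_Ico))
    (fun k m hkm => Disjoint.preimage _ (by simpa [Subtype.ext_iff] using hkm))
    (measure_ne_top_of_subset cells_subset hU)
  simp only [volume_cellIndex_preimage_singleton hA hε, le_refl, ofPred_true] at hfin
  exact finite_coe_iff.1 (finite_univ_iff.1 hfin)

end LatticeCoordinates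

section SublatticeCells

variable {d : ℕ} {A : Matrix (Fin d) (Fin d) ℝ} {ε : ℝ} {rv : Fin d → ℝ}
  {T : Matrix (Fin d) (Fin d) ℤ}

theorem intCast_mulVec (T : Matrix (Fin d) (Fin d) ℤ) (k : Fin d → ℤ) :
    (fun i => ((T *ᵥ k) i : ℝ)) = T.map ((↑) : ℤ → ℝ) *ᵥ fun i => (k i : ℝ) := by
  ext i
  simp [Matrix.mulVec, dotProduct]

theorem latPt_mul_intCast (k : Fin d → ℤ) :
    latPt d (A * T.map ((↑) : ℤ → ℝ)) ε 0 k 0 = latPt d A ε 0 (T *ᵥ k) 0 := by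
  simp only [latPt, Pi.zero_apply, zero_add, add_zero, intCast_mulVec, Matrix.mulVec_mulVec]

theorem latticeCoord_eq_mulVec (hT : T.det ≠ 0) (x : Fin d → ℝ) :
    latticeCoord A ε 0 x =
      T.map ((↑) : ℤ → ℝ) *ᵥ latticeCoord (A * T.map ((↑) : ℤ → ℝ)) ε 0 x := by
  have hTdet : IsUnit (T.map ((↑) : ℤ → ℝ)).det := by
    rw [← Int.cast_det]
    exact (Int.cast_ne_zero.2 hT).isUnit
  rw [latticeCoord, latticeCoord, sub_zero, sub_zero, Matrix.mulVec_mulVec, ← Matrix.smul_mul,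
    Matrix.mul_inv_rev, Matrix.mul_nonsing_inv_cancel_left _ _ hTdet]

theorem dist_mulVec_cellIndex_le (hT : T.det ≠ 0) {x : Fin d → ℝ} {m : Fin d → ℤ}
    (hm : m ∈ Icc (cellIndex d (A * T.map ((↑) : ℤ → ℝ)) ε 0 x)
      (cellIndex d (A * T.map ((↑) : ℤ → ℝ)) ε 0 x + 1)) :
    dist (T *ᵥ m) (cellIndex d A ε 0 x) ≤ ‖T.map ((↑) : ℤ → ℝ)‖ + 1 := by
  set k := cellIndex d (A * T.map ((↑) : ℤ → ℝ)) ε 0 x with hk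
  have dist_corner :
      dist (fun i => (m i : ℝ)) (latticeCoord (A * T.map ((↑) : ℤ → ℝ)) ε 0 x) ≤ 1 := by
    have hcorner : (fun i => (m i : ℝ)) - (fun i => (k i : ℝ)) ∈ Icc (0 : Fin d → ℝ) 1 := by
      refine ⟨fun i => sub_nonneg.2 (Int.cast_le.2 (hm.1 i)), fun i => sub_le_iff_le_add'.2 ?_⟩
      have hi : m i ≤ k i + 1 := hm.2 i
      simp only [Pi.one_apply]
      exact_mod_cast hi
    rw [← cellIndex_add_refCoord, ← hk, dist_eq_norm, ← sub_sub, ← dist_eq_norm]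
    exact dist_le_one_of_mem_Icc hcorner (refCoord_mem_Icc x)
  rw [← dist_intCast_pi]
  calc dist (fun i => ((T *ᵥ m) i : ℝ)) (fun i => (cellIndex d A ε 0 x i : ℝ))
      ≤ dist (fun i => ((T *ᵥ m) i : ℝ)) (latticeCoord A ε 0 x) +
          dist (latticeCoord A ε 0 x) (fun i => (cellIndex d A ε 0 x i : ℝ)) := dist_triangle _ _ _
    _ ≤ ‖T.map ((↑) : ℤ → ℝ)‖ * 1 + 1 := by
        refine add_le_add ?_ ((dist_comm _ _).trans_le (dist_cellIndex_latticeCoord_le_one x))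
        rw [latticeCoord_eq_mulVec hT, intCast_mulVec, dist_eq_norm, ← Matrix.mulVec_sub]
        refine (Matrix.linfty_opNorm_mulVec _ _).trans ?_
        gcongr
        rwa [← dist_eq_norm]
    _ = ‖T.map ((↑) : ℤ → ℝ)‖ + 1 := by rw [mul_one]

end SublatticeCells

section Interpolations

variable {d : ℕ} {A : Matrix (Fin d) (Fin d) ℝ} {ε : ℝ} {rv : Fin d → ℝ} {Cint : ℝ}
  {y : (Fin d → ℝ) → Fin d → ℝ} {x : Fin d → ℝ}

theorem dist_cellCorner_le_of_intactCell {q : Fin d → ℤ} (hq : IntactCell d A ε rv Cint y q)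
    (b b' : Fin d → Bool) :
    dist (y (cellCorner d A ε rv q b)) (y (cellCorner d A ε rv q b')) ≤ Cint * ε :=
  (dist_eq_norm _ _).trans_le ((norm_le_eunorm _).trans (hq b b'))

theorem dist_latPt_le_of_intactCell {N : ℕ} {k m : Fin d → ℤ}
    (hk : ∀ q, dist q k ≤ N → IntactCell d A ε rv Cint y q) (hm : dist m k ≤ N) :
    dist (y (latPt d A ε rv m 0)) (y (latPt d A ε rv k 0)) ≤ N * (Cint * ε) := by
  refine dist_le_mul_of_dist_le_on_unit_cells (g := fun m => y (latPt d A ε rv m 0))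
    (fun q hq m hm m' hm' => ?_) le_rfl hm
  simpa only [latPt_eq_cellCorner hm, latPt_eq_cellCorner hm'] using
    dist_cellCorner_le_of_intactCell (hk q hq) _ _

theorem dist_tildey_latPt_cellIndex_le (hx : IntactCell d A ε rv Cint y (cellIndex d A ε rv x)) :
    dist (tildey d A ε rv Cint y x) (y (latPt d A ε rv (cellIndex d A ε rv x) 0)) ≤ Cint * ε := by
  rw [latPt_eq_cellCorner (left_mem_Icc.2 (le_add_of_nonneg_right zero_le_one))]
  have hnonneg : 0 ≤ Cint * ε :=
    dist_nonneg.trans (dist_cellCorner_le_of_intactCell hx (fun _ => false) fun _ => false)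
  refine (dist_pi_le_iff hnonneg).2 fun j => ?_
  simp only [tildey, if_pos hx]
  exact cubeInterp_mem_of_convex (convex_closedBall _ (Cint * ε))
    (fun b => (dist_le_pi_dist _ _ j).trans (dist_cellCorner_le_of_intactCell hx b _))
    (refCoord_mem_Icc x)

theorem barInterp_mem_of_convex [NeZero d] {D : Matrix (Fin d) (Fin d) ℝ} {s : Set (Fin d → ℝ)}
    (hs : Convex ℝ s) (h0 : y (latPt d D ε 0 (cellIndex d D ε 0 x) 0) ∈ s)
    (h1 : y (latPt d D ε 0 (cellIndex d D ε 0 x + Pi.single 0 1) 0) ∈ s) :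
    barInterp d ε Cint D (fun i => D i 0) y x ∈ s := by
  set u := (ε • D)⁻¹ *ᵥ x with hu
  have base : ε • D *ᵥ (fun i => (⌊u i⌋ : ℝ)) = latPt d D ε 0 (cellIndex d D ε 0 x) 0 := by
    simp [latPt, cellIndex, hu]
  have next : (fun i => latPt d D ε 0 (cellIndex d D ε 0 x) 0 i + ε * D i 0) =
      latPt d D ε 0 (cellIndex d D ε 0 x + Pi.single 0 1) 0 := by
    have hcol : D *ᵥ (fun i => ((Pi.single 0 1 : Fin d → ℤ) i : ℝ)) = D.col 0 := by
      rw [← Matrix.mulVec_single_one]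
      congr 1
      ext i
      simp [Pi.single_apply]
    have hadd : (fun i => ((cellIndex d D ε 0 x + Pi.single 0 1 : Fin d → ℤ) i : ℝ)) =
        (fun i => (cellIndex d D ε 0 x i : ℝ)) + fun i => ((Pi.single 0 1 : Fin d → ℤ) i : ℝ) := by
      ext i
      simp
    simp only [latPt, Pi.zero_apply, zero_add, add_zero, hadd, Matrix.mulVec_add, hcol]
    ext i
    simp [mul_add]
  rw [barInterp]
  simp only [← hu, base, next]
  split_ifs
  · exact hs h0 h1 (sub_nonneg.2 (Int.fract_lt_one (u 0)).le) (Int.fract_nonneg (u 0))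
      (sub_add_cancel _ _)
  · exact h0

theorem dist_tildey_barInterp_le [NeZero d] {T : Matrix (Fin d) (Fin d) ℤ} (hT : T.det ≠ 0)
    {N : ℕ} (hN : ‖T.map ((↑) : ℤ → ℝ)‖ + 1 ≤ N)
    (hx : ∀ q, dist q (cellIndex d A ε 0 x) ≤ N → IntactCell d A ε 0 Cint y q) :
    dist (tildey d A ε 0 Cint y x)
      (barInterp d ε Cint (A * T.map ((↑) : ℤ → ℝ))
        (fun i => (A * T.map ((↑) : ℤ → ℝ)) i 0) y x) ≤ (N + 1) * (Cint * ε) := by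
  set k := cellIndex d A ε 0 x
  set D := A * T.map ((↑) : ℤ → ℝ)
  have node_mem {m : Fin d → ℤ}
      (hm : m ∈ Icc (cellIndex d D ε 0 x) (cellIndex d D ε 0 x + 1)) :
      y (latPt d D ε 0 m 0) ∈ Metric.closedBall (y (latPt d A ε 0 k 0)) (N * (Cint * ε)) := by
    rw [latPt_mul_intCast]
    exact dist_latPt_le_of_intactCell hx ((dist_mulVec_cellIndex_le hT hm).trans hN)
  have single_mem : (Pi.single 0 1 : Fin d → ℤ) ∈ Icc 0 1 :=
    ⟨Pi.single_nonneg.2 zero_le_one, fun i => by rw [Pi.single_apply]; split_ifs <;> simp⟩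
  have hbar : barInterp d ε Cint D (fun i => D i 0) y x ∈
      Metric.closedBall (y (latPt d A ε 0 k 0)) (N * (Cint * ε)) :=
    barInterp_mem_of_convex (convex_closedBall _ _)
      (node_mem (left_mem_Icc.2 (le_add_of_nonneg_right zero_le_one)))
      (node_mem ⟨le_add_of_nonneg_right single_mem.1, by gcongr; exact single_mem.2⟩)
  have htilde : dist (tildey d A ε 0 Cint y x) (y (latPt d A ε 0 k 0)) ≤ Cint * ε :=
    dist_tildey_latPt_cellIndex_le (hx k (by simp))
  calc _ ≤ Cint * ε + N * (Cint * ε) :=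
        (dist_triangle_right _ _ _).trans (add_le_add htilde hbar)
    _ = (N + 1) * (Cint * ε) := by ring

end Interpolations

section BrokenCells

variable {d : ℕ} {A : Matrix (Fin d) (Fin d) ℝ} {ε : ℝ} {rv : Fin d → ℝ} {Cint : ℝ}
  {y : (Fin d → ℝ) → Fin d → ℝ} {U : Set (Fin d → ℝ)}

/-- The indices of the broken cells `C̄'_ε` whose closure is contained in `U`. -/
def brokenInnerCells (A : Matrix (Fin d) (Fin d) ℝ) (ε : ℝ) (rv : Fin d → ℝ) (Cint : ℝ)
    (y : (Fin d → ℝ) → Fin d → ℝ) (U : Set (Fin d → ℝ)) : Set (Fin d → ℤ) :=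
  {k | (∀ u : Fin d → ℝ, (∀ i, u i ∈ Icc (0 : ℝ) 1) → latPt d A ε rv k u ∈ U) ∧
    ¬ IntactCell d A ε rv Cint y k}

/-- The union of all cells within index distance `r` of a broken inner cell; off this set and away
from the boundary of `U`, the interpolations only see intact cells. -/
def brokenNeighborhood (A : Matrix (Fin d) (Fin d) ℝ) (ε : ℝ) (rv : Fin d → ℝ) (Cint : ℝ)
    (y : (Fin d → ℝ) → Fin d → ℝ) (U : Set (Fin d → ℝ)) (r : ℝ) : Set (Fin d → ℝ) :=
  ⋃ k ∈ brokenInnerCells A ε rv Cint y U, {x | dist k (cellIndex d A ε rv x) ≤ r}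

theorem volume_brokenNeighborhood_le (hA : A.det ≠ 0) (hε : 0 < ε) (hU : volume U ≠ ∞) {r : ℝ}
    (hr : 0 ≤ r) :
    volume (brokenNeighborhood A ε rv Cint y U r) ≤ ENNReal.ofReal
      ((brokenInnerCells A ε rv Cint y U).ncard * ε ^ d * (|A.det| * (2 * (r + 1)) ^ d)) := by
  set B := brokenInnerCells A ε rv Cint y U
  have hfin : B.Finite := (finite_setOf_cell_subset hA hε.ne' hU).subset fun k hk => hk.1
  calc volume (brokenNeighborhood A ε rv Cint y U r)
      ≤ ∑ k ∈ hfin.toFinset, volume {x | dist k (cellIndex d A ε rv x) ≤ r} := by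
        simpa [brokenNeighborhood] using measure_biUnion_finset_le hfin.toFinset
          fun k => {x | dist k (cellIndex d A ε rv x) ≤ r}
    _ ≤ ∑ _k ∈ hfin.toFinset, ENNReal.ofReal (|(ε • A).det| * (2 * (r + 1)) ^ d) :=
        Finset.sum_le_sum fun k _ => volume_dist_cellIndex_le hA hε.ne' k hr
    _ = ENNReal.ofReal (B.ncard * ε ^ d * (|A.det| * (2 * (r + 1)) ^ d)) := by
        rw [Finset.sum_const, ← ncard_eq_toFinset_card _ hfin, ← ENNReal.ofReal_nsmul,
          Matrix.det_smul, Fintype.card_fin, abs_mul, abs_of_pos (pow_pos hε d), nsmul_eq_mul]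
        ring_nf

theorem tendsto_volume_brokenNeighborhood {ι : Type*} {l : Filter ι} {ε : ι → ℝ}
    {y : ι → (Fin d → ℝ) → Fin d → ℝ} (hA : A.det ≠ 0) (hε : ∀ᶠ n in l, 0 < ε n)
    (hU : volume U ≠ ∞)
    (hcount : Tendsto (fun n => (brokenInnerCells A (ε n) rv Cint (y n) U).ncard * ε n ^ d) l
      (nhds 0)) {r : ℝ} (hr : 0 ≤ r) :
    Tendsto (fun n => volume (brokenNeighborhood A (ε n) rv Cint (y n) U r)) l (nhds 0) := by
  have hlim := ENNReal.tendsto_ofReal (hcount.mul_const (|A.det| * (2 * (r + 1)) ^ d))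
  rw [zero_mul, ENNReal.ofReal_zero] at hlim
  refine tendsto_of_tendsto_of_tendsto_of_le_of_le' tendsto_const_nhds hlim
    (Eventually.of_forall fun _ => zero_le) ?_
  filter_upwards [hε] with n hn
  exact volume_brokenNeighborhood_le hA hn hU hr

theorem intactCell_of_notMem_cthickening_of_notMem_brokenNeighborhood (hA : A.det ≠ 0)
    (hε : 0 < ε) {r : ℝ} {x : Fin d → ℝ}
    (hbdry : x ∉ Metric.cthickening (‖A‖ * (r + 1) * ε) Uᶜ)
    (hbroken : x ∉ brokenNeighborhood A ε rv Cint y U r) {q : Fin d → ℤ}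
    (hq : dist q (cellIndex d A ε rv x) ≤ r) : IntactCell d A ε rv Cint y q := by
  by_contra hnot
  refine hbroken (mem_biUnion (⟨fun u hu => ?_, hnot⟩ : q ∈ brokenInnerCells A ε rv Cint y U) hq)
  by_contra hout
  refine hbdry (Metric.mem_cthickening_of_dist_le x (latPt d A ε rv q u) _ _ hout ?_)
  have hu01 : u ∈ Icc (0 : Fin d → ℝ) 1 := ⟨fun i => (hu i).1, fun i => (hu i).2⟩
  calc dist x (latPt d A ε rv q u)
      = dist (latPt d A ε rv (cellIndex d A ε rv x) (refCoord d A ε rv x))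
          (latPt d A ε rv q u) := by rw [latPt_cellIndex_refCoord hA hε.ne']
    _ ≤ |ε| * (‖A‖ * (dist (cellIndex d A ε rv x) q + dist (refCoord d A ε rv x) u)) :=
        dist_latPt_le _ _ _ _
    _ ≤ |ε| * (‖A‖ * (r + 1)) := by
        gcongr
        · rwa [dist_comm]
        · exact dist_le_one_of_mem_Icc (refCoord_mem_Icc x) hu01
    _ = ‖A‖ * (r + 1) * ε := by rw [abs_of_pos hε, mul_comm]

end BrokenCells

section InteractionDirections

variable {d : ℕ} {A : Matrix (Fin d) (Fin d) ℝ}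

theorem exists_intCast_mulVec_of_mem_Vfin {ν : Fin d → ℝ} (hν : ν ∈ Vfin d A) :
    ∃ c : Fin d → ℤ, ν = A *ᵥ fun i => (c i : ℝ) := by
  obtain ⟨-, t, -, rfl⟩ : ν ≠ 0 ∧ ∃ t : Fin d → Fin 3, t ∈ Finset.univ ∧
      (A *ᵥ fun i => ((t i : ℕ) : ℝ) - 1) = ν := by
    simpa only [Vfin, Finset.mem_erase, Finset.mem_image] using hν
  exact ⟨fun i => (t i : ℕ) - 1, by simp⟩

theorem exists_eq_mul_intCast [NeZero d] {D : Matrix (Fin d) (Fin d) ℝ}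
    (h0 : D.col 0 ∈ Vfin d A) (h1 : ∀ j ≠ 0, ∃ jA, ∀ i, D i j = A i jA) :
    ∃ T : Matrix (Fin d) (Fin d) ℤ, D = A * T.map ((↑) : ℤ → ℝ) := by
  have hcol (j : Fin d) : ∃ c : Fin d → ℤ, D.col j = A *ᵥ fun i => (c i : ℝ) := by
    rcases eq_or_ne j 0 with rfl | hj
    · exact exists_intCast_mulVec_of_mem_Vfin h0
    · obtain ⟨jA, hjA⟩ := h1 j hj
      refine ⟨Pi.single jA 1, ?_⟩
      ext i
      simp [hjA, Matrix.mulVec, dotProduct, Pi.single_apply]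
  choose c hc using hcol
  refine ⟨Matrix.of fun i j => c j i, ?_⟩
  ext i j
  exact congrFun (hc j) i

end InteractionDirections

/-- Finite-range lattice directions are encoded by an integer matrix `T`: the directional cells
are those of the sublattice spanned by the columns of `A * T`, whose first column is `ν`. -/
theorem interpolations_have_same_limit_general {d : ℕ} [NeZero d] {A : Matrix (Fin d) (Fin d) ℝ}
    (hA : A.det ≠ 0) {T : Matrix (Fin d) (Fin d) ℤ} (hT : T.det ≠ 0) {U : Set (Fin d → ℝ)}
    (hU : volume U ≠ ∞) (hUint : volume (U \ interior U) = 0) {ι : Type*} {l : Filter ι}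
    {ε : ι → ℝ} (hε : Tendsto ε l (nhdsWithin 0 (Ioi 0))) {Cint : ℝ}
    {y : ι → (Fin d → ℝ) → Fin d → ℝ}
    (hcount : Tendsto (fun n => (brokenInnerCells A (ε n) 0 Cint (y n) U).ncard * ε n ^ d) l
      (nhds 0)) :
    TendstoInMeasure (volume.restrict U)
      (fun n x j => tildey d A (ε n) 0 Cint (y n) x j -
        barInterp d (ε n) Cint (A * T.map ((↑) : ℤ → ℝ))
          (fun i => (A * T.map ((↑) : ℤ → ℝ)) i 0) (y n) x j)
      l fun _ => 0 := by
  obtain ⟨hε0, hεpos⟩ := tendsto_nhdsWithin_iff.1 hε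
  obtain ⟨N, hN⟩ := exists_nat_ge (‖T.map ((↑) : ℤ → ℝ)‖ + 1)
  have hbdry := tendsto_measure_restrict_cthickening_compl hU hUint
    (by simpa using hε0.const_mul (‖A‖ * (N + 1)) :
      Tendsto (fun n => ‖A‖ * (N + 1) * ε n) l (nhds 0))
  have hbroken := tendsto_volume_brokenNeighborhood hA hεpos hU hcount N.cast_nonneg
  have herror : Tendsto (fun n => ENNReal.ofReal ((N + 1) * (Cint * ε n))) l (nhds 0) := by
    simpa using ENNReal.tendsto_ofReal ((hε0.const_mul Cint).const_mul ((N : ℝ) + 1))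
  have hbad : Tendsto (fun n => volume.restrict U
      (Metric.cthickening (‖A‖ * (N + 1) * ε n) Uᶜ ∪
        brokenNeighborhood A (ε n) 0 Cint (y n) U N)) l (nhds 0) :=
    tendsto_of_tendsto_of_tendsto_of_le_of_le tendsto_const_nhds
      (by simpa using hbdry.add hbroken) (fun _ => zero_le) fun n =>
        (measure_union_le _ _).trans (add_le_add le_rfl (Measure.restrict_le_self _))
  refine tendstoInMeasure_of_edist_le_off herror hbad ?_
  filter_upwards [hεpos] with n hn x hx
  rw [mem_union, not_or] at hx
  have hdist := dist_tildey_barInterp_le (Cint := Cint) (y := y n) hT hN fun q =>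
    intactCell_of_notMem_cthickening_of_notMem_brokenNeighborhood hA hn hx.1 hx.2
  rw [edist_dist, dist_zero_right]
  exact ENNReal.ofReal_le_ofReal ((dist_eq_norm _ _).symm.trans_le hdist)

/-- The simplicial interpolation `ỹ_k` and the directional interpolation
`ȳ_{ν,k}` have the same limit: if the number of broken cells is at most `C ε_k^{-d+1}`, then
`ỹ_k - ȳ_{ν,k} → 0` in measure for every interaction direction `ν ∈ 𝒱`. -/
theorem interpolations_have_same_limit
    (d : ℕ) [NeZero d] (hd : 2 ≤ d) (A : Matrix (Fin d) (Fin d) ℝ) (hA : 0 < A.det)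
    (U : Set (Fin d → ℝ)) (hU : IsOpen U) (hUb : Bornology.IsBounded U)
    (εs : ℕ → ℝ) (hεpos : ∀ n, 0 < εs n) (hεlim : Tendsto εs atTop (nhds 0))
    (Cint : ℝ) (hCint : 1 ≤ Cint)
    (ys : ℕ → (Fin d → ℝ) → Fin d → ℝ)
    (Cb : ℝ)
    -- `# C̄'_{ε_k} ≤ C ε_k^{-d+1}`
    (hcount : ∀ n,
      (({k : Fin d → ℤ |
          (∀ u : Fin d → ℝ, (∀ i, u i ∈ Icc (0 : ℝ) 1) → latPt d A (εs n) 0 k u ∈ U) ∧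
          ¬ IntactCell d A (εs n) 0 Cint (ys n) k}).ncard : ℝ) ≤ Cb * εs n ^ ((1 : ℝ) - d)) :
    ∀ ν ∈ Vfin d A, ∀ Dν : Matrix (Fin d) (Fin d) ℝ,
      (∀ i, Dν i 0 = ν i) →
      (∀ j : Fin d, j ≠ 0 → ∃ jA : Fin d, ∀ i, Dν i j = A i jA) →
      Dν.det ≠ 0 →
      TendstoInMeasure (volume.restrict U)
        (fun n x => (fun j =>
          tildey d A (εs n) 0 Cint (ys n) x j - barInterp d (εs n) Cint Dν ν (ys n) x j))
        atTop (fun _ => 0) := by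
  intro ν hν Dν h0 h1 hdet
  obtain rfl : (fun i => Dν i 0) = ν := funext h0
  obtain ⟨T, rfl⟩ := exists_eq_mul_intCast hν h1
  have hT : T.det ≠ 0 := fun h => hdet (by rw [Matrix.det_mul, ← Int.cast_det, h]; simp)
  have hε : Tendsto εs atTop (nhdsWithin 0 (Ioi 0)) :=
    tendsto_nhdsWithin_iff.2 ⟨hεlim, Eventually.of_forall hεpos⟩
  exact interpolations_have_same_limit_general hA.ne' hT hUb.measure_lt_top.ne
    (by simp [hU.interior_eq]) hε
    (tendsto_mul_pow_of_le_rpow_one_sub hε (fun _ => Nat.cast_nonneg _) hcount)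

end Cleavage
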